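/- Let N be a finite set of players with a distinguished platform player w_p ∈ N, and let S be a finite index set of sessions, where session s is an owner map P_s : {0,1,…,n_s} → N (n_s ≥ 1) with P_s(0) = w_p and P_s(k) ≠ w_p for 1 ≤ k ≤ n_s, together with revenues r_s : {1,…,n_s} → ℝ. Let V be the multi-session game under Assumptions 1 and 2. Then for every player i ∈ N, the Shapley value of i in V equals Sh_i(V) = Σ_{s ∈ S} Σ_{k=1}^{n_s} ([i ∈ P_s(E^k)] / n^p_{s,k}) · r_s(k), where [i ∈ P_s(E^k)] is 1 if i ∈ P_s(E^k) and 0 otherwise. -/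

import Mathlib

open Finset

/-!
The Shapley value is linear and `V` is a combination of unanimity games, one per event, so it
suffices to compute the Shapley value of the unanimity game on a coalition `T`. For `i ∈ T` it is
the total Shapley weight of the coalitions between `T \ {i}` and `N \ {i}`. The weights satisfy the
recurrence of Leibniz's harmonic triangle, which says that this total does not change when players
outside `T` are removed; once only `T` is left, it is the single weight `1 / |T|`.
-/

theorem sum_Icc_finset_insert {α M : Type*} [DecidableEq α] [AddCommMonoid M] {A B : Finset α}
    {a : α} (haA : a ∉ A) (haB : a ∉ B) (f : Finset α → M) :
    ∑ F ∈ Icc A (insert a B), f F = ∑ F ∈ Icc A B, (f F + f (insert a F)) := by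
  simp only [Icc_eq_filter_powerset, sum_filter, sum_powerset_insert haB,
    subset_insert_iff_of_notMem haA, ← sum_add_distrib, ← ite_add_zero]

section ShapleyWeight

variable (K : Type*) [Field K]

/-- The weight `k! (n - k - 1)! / n!` of a coalition of `k` players in the Shapley value of a game
with `n` players. Only `k < n` is meaningful, because of the truncated subtraction. -/
def shapleyWeight (n k : ℕ) : K :=
  (k.factorial * (n - k - 1).factorial : K) / n.factorial

variable [CharZero K]

theorem shapleyWeight_succ_self (n : ℕ) : shapleyWeight K (n + 1) n = 1 / (n + 1 : ℕ) := by
  have hn : (n.factorial : K) ≠ 0 := mod_cast n.factorial_ne_zero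
  simp [shapleyWeight, Nat.factorial_succ, mul_comm ((n : K) + 1), div_mul_cancel_left₀ hn]

theorem shapleyWeight_succ_add_shapleyWeight_succ_succ {n k : ℕ} (hk : k < n) :
    shapleyWeight K (n + 1) k + shapleyWeight K (n + 1) (k + 1) = shapleyWeight K n k := by
  obtain ⟨m, rfl⟩ : ∃ m, n = k + m + 1 := Nat.exists_eq_add_of_lt hk
  have hm : k + m + 1 - k - 1 = m := by lia
  have hm_left : k + m + 1 + 1 - k - 1 = m + 1 := by lia
  have hm_right : k + m + 1 + 1 - (k + 1) - 1 = m := by lia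
  rw [shapleyWeight, shapleyWeight, shapleyWeight, hm, hm_left, hm_right, ← add_div,
    Nat.factorial_succ (k + m + 1), Nat.factorial_succ k, Nat.factorial_succ m,
    div_eq_div_iff (by norm_cast; positivity) (by norm_cast; positivity)]
  push_cast
  ring

theorem sum_Icc_shapleyWeight {α : Type*} [DecidableEq α] {A B : Finset α} (hAB : A ⊆ B) :
    ∑ F ∈ Icc A B, shapleyWeight K (#B + 1) #F = 1 / (#A + 1 : ℕ) := by
  obtain ⟨D, hAD, rfl⟩ : ∃ D, Disjoint D A ∧ D ∪ A = B :=
    ⟨B \ A, sdiff_disjoint, sdiff_union_of_subset hAB⟩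
  clear hAB
  induction D using Finset.induction_on with
  | empty => simp [shapleyWeight_succ_self]
  | insert a D haD ih =>
    obtain ⟨haA, hDA⟩ := disjoint_insert_left.mp hAD
    have ha : a ∉ D ∪ A := by simp [haD, haA]
    rw [insert_union, sum_Icc_finset_insert haA ha, card_insert_of_notMem ha, ← ih hDA]
    refine sum_congr rfl fun F hF => ?_
    have hFB : F ⊆ D ∪ A := (mem_Icc.mp hF).2
    rw [card_insert_of_notMem (notMem_mono hFB ha)]
    exact shapleyWeight_succ_add_shapleyWeight_succ_succ K
      (Nat.lt_succ_of_le (card_le_card hFB))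

end ShapleyWeight

section ShapleyValue

variable (K : Type*) [Field K] {N : Type*} [DecidableEq N]

/-- The unanimity game on the coalition `T`, worth `1` to the coalitions that contain `T` and `0`
to all others. -/
def unanimityGame (T : Finset N) : Finset N → K :=
  fun F => if T ⊆ F then 1 else 0

variable [Fintype N]

/-- The Shapley value of player `i`, as a linear form on the space of games; games need not vanish
on the empty coalition. -/
def shapleyValue (i : N) : (Finset N → K) →ₗ[K] K where
  toFun v := ∑ F ∈ (univ.erase i).powerset,
    shapleyWeight K (Fintype.card N) #F * (v (insert i F) - v F)
  map_add' v w := by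
    simp only [Pi.add_apply, add_sub_add_comm, mul_add, sum_add_distrib]
  map_smul' c v := by
    simp only [Pi.smul_apply, smul_eq_mul, ← mul_sub, mul_left_comm, mul_sum, RingHom.id_apply]

theorem shapleyValue_apply (i : N) (v : Finset N → K) :
    shapleyValue K i v = ∑ F ∈ (univ.erase i).powerset,
      shapleyWeight K (Fintype.card N) #F * (v (insert i F) - v F) :=
  rfl

theorem shapleyValue_unanimityGame_of_notMem {T : Finset N} {i : N} (hi : i ∉ T) :
    shapleyValue K i (unanimityGame K T) = 0 := by
  simp [shapleyValue_apply, unanimityGame, subset_insert_iff_of_notMem hi]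

theorem shapleyValue_unanimityGame_of_mem [CharZero K] {T : Finset N} {i : N} (hi : i ∈ T) :
    shapleyValue K i (unanimityGame K T) = 1 / #T := by
  have marginal : ∀ F ∈ (univ.erase i).powerset,
      unanimityGame K T (insert i F) - unanimityGame K T F = if T.erase i ⊆ F then 1 else 0 := by
    intro F hF
    have hiF : i ∉ F := notMem_mono (mem_powerset.mp hF) (notMem_erase i univ)
    have hTF : ¬T ⊆ F := fun h => hiF (h hi)
    simp [unanimityGame, hTF, subset_insert_iff]
  calc shapleyValue K i (unanimityGame K T)
      = ∑ F ∈ Icc (T.erase i) (univ.erase i), shapleyWeight K (Fintype.card N) #F := by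
        rw [shapleyValue_apply, Icc_eq_filter_powerset, sum_filter]
        exact sum_congr rfl fun F hF => by rw [marginal F hF, mul_ite, mul_one, mul_zero]
    _ = 1 / #T := by
        rw [← card_univ, ← card_erase_add_one (mem_univ i), ← card_erase_add_one hi]
        exact sum_Icc_shapleyWeight K (erase_subset_erase i (subset_univ T))

theorem shapley_value_multi_session_A12_general [CharZero K] {κ : Type*} (E : Finset κ)
    (T : κ → Finset N) (c : κ → K) (i : N) :
    shapleyValue K i (∑ e ∈ E, c e • unanimityGame K (T e))
      = ∑ e ∈ E, if i ∈ T e then c e / #(T e) else 0 := by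
  simp only [map_sum, map_smul, smul_eq_mul]
  refine sum_congr rfl fun e _ => ?_
  split_ifs with hi
  · rw [shapleyValue_unanimityGame_of_mem K hi, mul_one_div]
  · rw [shapleyValue_unanimityGame_of_notMem K hi, mul_zero]

end ShapleyValue

/-- For the multi-session game `V` under Assumptions 1 and 2, the
Shapley value of player `i` equals
`Σ_{s ∈ S} Σ_{k=1}^{n_s} ([i ∈ P_s(E^k)] / n^p_{s,k}) · r_s(k)`. -/
theorem shapley_value_multi_session_A12
    {N : Type*} [Fintype N] [DecidableEq N] {ι : Type*}
    (wp : N) (S : Finset ι) (ns : ι → ℕ) (P : ι → ℕ → N) (r : ι → ℕ → ℝ)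
    (hns : ∀ s ∈ S, 1 ≤ ns s)
    (hP0 : ∀ s ∈ S, P s 0 = wp)
    (hPk : ∀ s ∈ S, ∀ k, 1 ≤ k → k ≤ ns s → P s k ≠ wp)
    (V : Finset N → ℝ)
    (hV : ∀ F : Finset N, V F = ∑ s ∈ S, ∑ k ∈ Finset.Icc 1 (ns s),
      if (Finset.range (k + 1)).image (P s) ⊆ F then r s k else 0)
    (i : N) :
    (∑ F ∈ (Finset.univ.erase i).powerset,
        ((F.card.factorial * (Fintype.card N - F.card - 1).factorial : ℝ) /
          (Fintype.card N).factorial) * (V (insert i F) - V F))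
      = ∑ s ∈ S, ∑ k ∈ Finset.Icc 1 (ns s),
          (if i ∈ (Finset.range (k + 1)).image (P s) then (1 : ℝ) else 0) /
            (((Finset.range (k + 1)).image (P s)).card : ℝ) * r s k := by
  have hV_unanimity : V = ∑ e ∈ S.sigma fun s => Icc 1 (ns s),
      r e.1 e.2 • unanimityGame ℝ ((range (e.2 + 1)).image (P e.1)) := by
    ext F
    simp [hV, unanimityGame, sum_sigma]
  change shapleyValue ℝ i V = _
  rw [hV_unanimity, shapley_value_multi_session_A12_general, sum_sigma]
  simp only [ite_div, ite_mul, zero_div, zero_mul, one_div_mul_eq_div]
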